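/- arXiv:math/0102212 — 2 statements merged into one kernel-verified Lean document; each statement's English description precedes it below -/
import Mathlib

section
/- For a Banach space X the following are equivalent: (1) X has property upper (H) (respectively lower (H)); (2) there is a δ ∈ (0,1) and a function f(·) such that for every normalized λ-unconditional basic sequence (x_i)_{i=1}^n in X there is a subset F ⊆ {1,…,n} with |F| ≥ δn such that ‖Σ_{i∈G} x_i‖ ≤ f(λ)|G|^{1/2} for every G ⊆ F (respectively ‖Σ_{i∈G} x_i‖ ≥ f(λ)^{-1}|G|^{1/2} for every G ⊆ F). -/
/-!
Subsequences of a normalized `lam`-unconditional sequence are again normalized and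
`lam`-unconditional, with the same constant. Hence property (H) applies to every subset `G` of the
index set, and one may take `F` to be everything.

Conversely, in the upper case one splits off `F`, a proportion `δ` of the indices, and applies the
hypothesis again to the remaining indices, of which there are at most `(1 - δ) n`. The triangle
inequality then gives a geometric series with ratio `√(1 - δ) < 1`, so `K = f / (1 - √(1 - δ))`
works; this is a strong induction on `n` (`upper_of_subsets`). In the lower case no iteration is
needed: unconditionality makes the coordinate projection onto `F` bounded by `(1 + lam) / 2`
(`norm_sum_subset_le`), so the lower bound for `∑ i ∈ F, x i` passes to the whole sum.
-/


open scoped BigOperators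

/-- `(x i)` is a normalized `lam`-unconditional (finite) basic sequence in `X`. -/
def NormalizedUncond {X : Type*} [NormedAddCommGroup X] [NormedSpace ℝ X]
    (lam : ℝ) {n : ℕ} (x : Fin n → X) : Prop :=
  (∀ i, ‖x i‖ = 1) ∧
  ∀ (ε a : Fin n → ℝ), (∀ i, ε i = 1 ∨ ε i = -1) →
    ‖∑ i, (ε i * a i) • x i‖ ≤ lam * ‖∑ i, a i • x i‖

/-- property upper (H) -/
def UpperH (X : Type*) [NormedAddCommGroup X] [NormedSpace ℝ X] : Prop :=
  ∃ f : ℝ → ℝ, ∀ (lam : ℝ) (n : ℕ) (x : Fin n → X), NormalizedUncond lam x →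
    ‖∑ i, x i‖ ≤ f lam * Real.sqrt n

/-- property lower (H) -/
def LowerH (X : Type*) [NormedAddCommGroup X] [NormedSpace ℝ X] : Prop :=
  ∃ f : ℝ → ℝ, (∀ lam, 0 < f lam) ∧
    ∀ (lam : ℝ) (n : ℕ) (x : Fin n → X), NormalizedUncond lam x →
      Real.sqrt n / f lam ≤ ‖∑ i, x i‖

/-- property upper (H₂) -/
def UpperH2 (X : Type*) [NormedAddCommGroup X] [NormedSpace ℝ X] : Prop :=
  ∃ C : ℝ → ℝ → ℝ, ∀ (δ : ℝ), 0 < δ → δ < 1 →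
    ∀ (lam : ℝ) (n : ℕ) (x : Fin n → X), NormalizedUncond lam x →
      ∃ F : Finset (Fin n), δ * n ≤ F.card ∧
        ∀ a : Fin n → ℝ, ‖∑ i ∈ F, a i • x i‖ ≤ C lam δ * Real.sqrt (∑ i ∈ F, a i ^ 2)

/-- property lower (H₂) -/
def LowerH2 (X : Type*) [NormedAddCommGroup X] [NormedSpace ℝ X] : Prop :=
  ∃ C : ℝ → ℝ → ℝ, (∀ lam δ, 0 < C lam δ) ∧
    ∀ (δ : ℝ), 0 < δ → δ < 1 →
      ∀ (lam : ℝ) (n : ℕ) (x : Fin n → X), NormalizedUncond lam x →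
        ∃ F : Finset (Fin n), δ * n ≤ F.card ∧
          ∀ a : Fin n → ℝ, Real.sqrt (∑ i ∈ F, a i ^ 2) / C lam δ ≤ ‖∑ i ∈ F, a i • x i‖

section

variable {X : Type*} [NormedAddCommGroup X] [NormedSpace ℝ X]

/-- Subsequences inherit unconditionality: extend the signs by `1` and the scalars by `0`. -/
lemma NormalizedUncond.comp {lam : ℝ} {n m : ℕ} {x : Fin n → X} (h : NormalizedUncond lam x)
    (e : Fin m → Fin n) (he : Function.Injective e) : NormalizedUncond lam (x ∘ e) := by
  refine ⟨fun i => h.1 _, fun ε a hε => ?_⟩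
  have key := h.2 (Function.extend e ε 1) (Function.extend e a 0) (by
    intro i
    by_cases hi : ∃ j, e j = i
    · obtain ⟨j, rfl⟩ := hi
      rw [he.extend_apply]
      exact hε j
    · left
      rw [Function.extend_apply' _ _ _ hi]
      rfl)
  have h0 : ∀ i ∉ Set.range e, Function.extend e a 0 i = 0 := fun i hi => by
    rw [Function.extend_apply' _ _ _ (by simpa using hi)]
    rfl
  have h1 : ∑ j, (ε j * a j) • (x ∘ e) j
      = ∑ i, (Function.extend e ε 1 i * Function.extend e a 0 i) • x i :=
    Fintype.sum_of_injective e he _ _ (fun i hi => by simp [h0 i hi])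
      (fun j => by simp [he.extend_apply])
  have h2 : ∑ j, a j • (x ∘ e) j = ∑ i, Function.extend e a 0 i • x i :=
    Fintype.sum_of_injective e he _ _ (fun i hi => by simp [h0 i hi])
      (fun j => by simp [he.extend_apply])
  rw [h1, h2]
  exact key

lemma sum_orderEmbOfFin {E : Type*} [AddCommMonoid E] {n : ℕ} (x : Fin n → E) (S : Finset (Fin n)) :
    ∑ j, (x ∘ S.orderEmbOfFin rfl) j = ∑ i ∈ S, x i := by
  conv_rhs => rw [← S.map_orderEmbOfFin_univ rfl, Finset.sum_map]
  rfl

lemma NormalizedUncond.subset {lam : ℝ} {n : ℕ} {x : Fin n → X} (h : NormalizedUncond lam x)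
    (S : Finset (Fin n)) : NormalizedUncond lam (x ∘ S.orderEmbOfFin rfl) :=
  h.comp _ (S.orderEmbOfFin rfl).injective

/-- The projection onto the coordinates in `F` is half the sum of the identity and the sign change
which is `1` on `F` and `-1` off `F`. -/
lemma norm_sum_subset_le {lam : ℝ} {n : ℕ} {x : Fin n → X} (h : NormalizedUncond lam x)
    (F : Finset (Fin n)) : ‖∑ i ∈ F, x i‖ ≤ (1 + |lam|) / 2 * ‖∑ i, x i‖ := by
  have key := h.2 (fun i => if i ∈ F then 1 else -1) 1 (fun i => by
    by_cases hi : i ∈ F <;> simp [hi])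
  simp only [Pi.one_apply, mul_one, one_smul] at key
  have hs : ∑ i ∈ F, x i
      = (1 / 2 : ℝ) • (∑ i, x i + ∑ i, (if i ∈ F then (1 : ℝ) else -1) • x i) := by
    rw [← Finset.sum_add_distrib, Finset.smul_sum, ← Finset.sum_subset (Finset.subset_univ F)]
    · refine Finset.sum_congr rfl fun i hi => ?_
      rw [if_pos hi, one_smul, ← two_smul ℝ, smul_smul]
      norm_num
    · intro i _ hi
      simp [hi]
  rw [hs, norm_smul, Real.norm_of_nonneg (by norm_num)]
  have := norm_add_le (∑ i, x i) (∑ i, (if i ∈ F then (1 : ℝ) else -1) • x i)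
  have := mul_le_mul_of_nonneg_right (le_abs_self lam) (norm_nonneg (∑ i, x i))
  linarith

/-- Splitting off `F` and iterating on its complement turns a bound on a proportion `δ` of the
indices into a bound on all of them; the constant `K` of the conclusion is the solution of
`c + K √(1 - δ) = K`. -/
lemma upper_of_subsets {δ lam c : ℝ} (hδ : 0 < δ) (hδ1 : δ < 1) (hc : 0 ≤ c)
    (H : ∀ (n : ℕ) (x : Fin n → X), NormalizedUncond lam x →
      ∃ F : Finset (Fin n), δ * n ≤ F.card ∧ ‖∑ i ∈ F, x i‖ ≤ c * Real.sqrt F.card)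
    (n : ℕ) : ∀ x : Fin n → X, NormalizedUncond lam x →
      ‖∑ i, x i‖ ≤ c / (1 - Real.sqrt (1 - δ)) * Real.sqrt n := by
  have hlt : Real.sqrt (1 - δ) < 1 := by
    rw [Real.sqrt_lt' one_pos]
    linarith
  set K := c / (1 - Real.sqrt (1 - δ)) with hK
  have hK0 : 0 ≤ K := div_nonneg hc (by linarith)
  have hKeq : c + K * Real.sqrt (1 - δ) = K := by
    have : K * (1 - Real.sqrt (1 - δ)) = c := div_mul_cancel₀ _ (by linarith)
    linarith
  induction n using Nat.strong_induction_on with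
  | _ n ih =>
    intro x hx
    rcases Nat.eq_zero_or_pos n with rfl | hn
    · simp
    obtain ⟨F, hF, hb⟩ := H n x hx
    have hn' : (0 : ℝ) < n := by exact_mod_cast hn
    have hFpos : 0 < F.card := by
      have : (0 : ℝ) < F.card := lt_of_lt_of_le (by positivity) hF
      exact_mod_cast this
    have hFn : F.card ≤ n := by simpa using F.card_le_univ
    have hcard : Fᶜ.card = n - F.card := by simp [Finset.card_compl]
    have hcard' : (Fᶜ.card : ℝ) = n - F.card := by rw [hcard, Nat.cast_sub hFn]
    have hrest := ih Fᶜ.card (by omega) _ (hx.subset Fᶜ)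
    rw [sum_orderEmbOfFin] at hrest
    have s1 : Real.sqrt F.card ≤ Real.sqrt n := Real.sqrt_le_sqrt (by exact_mod_cast hFn)
    have s2 : Real.sqrt Fᶜ.card ≤ Real.sqrt (1 - δ) * Real.sqrt n := by
      rw [← Real.sqrt_mul (by linarith)]
      exact Real.sqrt_le_sqrt (by rw [hcard']; linarith)
    calc ‖∑ i, x i‖ = ‖∑ i ∈ F, x i + ∑ i ∈ Fᶜ, x i‖ := by rw [Finset.sum_add_sum_compl]
      _ ≤ ‖∑ i ∈ F, x i‖ + ‖∑ i ∈ Fᶜ, x i‖ := norm_add_le _ _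
      _ ≤ c * Real.sqrt n + K * (Real.sqrt (1 - δ) * Real.sqrt n) :=
        add_le_add (hb.trans (mul_le_mul_of_nonneg_left s1 hc))
          (hrest.trans (mul_le_mul_of_nonneg_left s2 hK0))
      _ = (c + K * Real.sqrt (1 - δ)) * Real.sqrt n := by ring
      _ = K * Real.sqrt n := by rw [hKeq]

end

theorem statement2 (X : Type*) [NormedAddCommGroup X] [NormedSpace ℝ X] [CompleteSpace X] :
    (UpperH X ↔
      ∃ δ : ℝ, 0 < δ ∧ δ < 1 ∧ ∃ f : ℝ → ℝ,
        ∀ (lam : ℝ) (n : ℕ) (x : Fin n → X), NormalizedUncond lam x →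
          ∃ F : Finset (Fin n), δ * n ≤ F.card ∧
            ∀ G ⊆ F, ‖∑ i ∈ G, x i‖ ≤ f lam * Real.sqrt G.card) ∧
    (LowerH X ↔
      ∃ δ : ℝ, 0 < δ ∧ δ < 1 ∧ ∃ f : ℝ → ℝ, (∀ lam, 0 < f lam) ∧
        ∀ (lam : ℝ) (n : ℕ) (x : Fin n → X), NormalizedUncond lam x →
          ∃ F : Finset (Fin n), δ * n ≤ F.card ∧
            ∀ G ⊆ F, Real.sqrt G.card / f lam ≤ ‖∑ i ∈ G, x i‖) := by
  refine ⟨⟨?_, ?_⟩, ⟨?_, ?_⟩⟩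
  · rintro ⟨f, hf⟩
    refine ⟨1 / 2, by norm_num, by norm_num, f, fun lam n x hx => ⟨Finset.univ, ?_, ?_⟩⟩
    · have : (0 : ℝ) ≤ n := n.cast_nonneg
      rw [Finset.card_univ, Fintype.card_fin]
      linarith
    · intro G _
      have := hf lam _ _ (hx.subset G)
      rwa [sum_orderEmbOfFin] at this
  · rintro ⟨δ, hδ, hδ1, f, hf⟩
    -- `f lam` may be negative when only the empty sequence is `lam`-unconditional.
    refine ⟨fun lam => max (f lam) 0 / (1 - Real.sqrt (1 - δ)), fun lam n x hx => ?_⟩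
    refine upper_of_subsets hδ hδ1 (le_max_right _ _) (fun m y hy => ?_) n x hx
    obtain ⟨F, hF, hG⟩ := hf lam m y hy
    exact ⟨F, hF, (hG F subset_rfl).trans
      (mul_le_mul_of_nonneg_right (le_max_left _ _) (Real.sqrt_nonneg _))⟩
  · rintro ⟨f, hf0, hf⟩
    refine ⟨1 / 2, by norm_num, by norm_num, f, hf0, fun lam n x hx => ⟨Finset.univ, ?_, ?_⟩⟩
    · have : (0 : ℝ) ≤ n := n.cast_nonneg
      rw [Finset.card_univ, Fintype.card_fin]
      linarith
    · intro G _
      have := hf lam _ _ (hx.subset G)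
      rwa [sum_orderEmbOfFin] at this
  · rintro ⟨δ, hδ, -, f, hf0, hf⟩
    have hsδ : 0 < Real.sqrt δ := Real.sqrt_pos.2 hδ
    have hpos : ∀ lam, 0 < f lam * ((1 + |lam|) / 2) / Real.sqrt δ := fun lam => by
      have := hf0 lam
      positivity
    refine ⟨fun lam => f lam * ((1 + |lam|) / 2) / Real.sqrt δ, hpos, fun lam n x hx => ?_⟩
    obtain ⟨F, hF, hG⟩ := hf lam n x hx
    have h1 := (hG F subset_rfl).trans (norm_sum_subset_le hx F)
    rw [div_le_iff₀ (hf0 lam)] at h1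
    have h2 : Real.sqrt δ * Real.sqrt n ≤ Real.sqrt F.card := by
      rw [← Real.sqrt_mul hδ.le]
      exact Real.sqrt_le_sqrt hF
    rw [div_le_iff₀ (hpos lam), mul_div_assoc', le_div_iff₀ hsδ]
    linarith
end

section
/- Let X be a Banach sequence space which is p-convex and q-concave with 1 < p < q < ∞, and suppose max_{0≤j<k} ‖L_k^j‖ ≤ C k^a with a + 1/p < 1. Then the quasi-norm ‖ξ‖_{X_inf} = inf_{σ∈Π} ‖S_σ ξ‖_X on c₀₀ is equivalent to a norm; indeed the resulting quasi-Banach lattice X_inf is lattice r-convex for every r with 1/r > a + 1/p. -/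
/-!
Vectors with small norm in `X_inf` can be rearranged so as to have small norm in `X`, and then
moved by the operators `L_K^c` onto pairwise disjoint arithmetic progressions. By `p`-convexity a
vector that is pointwise below `sup_i |z i|` satisfies
`‖w‖_inf ^ p ≤ M ^ p ∑ i, (C (K i) ^ a ‖z i‖_inf) ^ p`, where `K i` are the moduli
(`XinfN_rpow_le_of_progressions`). There are disjoint progressions with `K i = O(i ^ (1 + η))`
for every `η > 0` (`exists_progressions`), so if `‖z i‖_inf ≤ i ^ (-1 / r)` with
`1 / r > a + 1 / p`, then the right-hand side is bounded.

To pass from suprema to `u = (∑ j, P j |z j| ^ r) ^ (1 / r)`, with `P` a probability vector and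
`‖z j‖_inf ≤ 1`, draw independent indices `J 1, J 2, …` with law `P`. At each coordinate,
`sup_i (l / i) ^ (1 / r) |z (J i)|` is at least `u` with probability at least `1 - exp (1 - l)`
(`prob_bound`). Let `y` be the restriction of `u` to the random set where this fails.
The `q`-concavity of `X` passes to `X_inf` (`XinfN_qconcave`) and shows that for some draw
`‖y‖_inf` is at most a small multiple of `‖u‖_inf`. Applying the estimate for suprema to `y`
together with the rescaled draws, the contribution of `y` is absorbed into the left-hand side,
which bounds `‖u‖_inf` by a constant (`XinfN_normalized_convex`). Homogeneity gives `r`-convexity.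

Since `a + 1 / p < 1`, the case `r = 1` applies, and it says exactly that `X_inf` is equivalent to
the seminorm obtained by taking the infimum of `∑ ‖y‖_inf` over decompositions (`XinfHull`).
-/

open scoped ENNReal BigOperators

noncomputable section

/-- The operator `L_k^j`, determined by `L_k^j (e_n) = e_{k n + j}`. -/
def Lmap (k j : ℕ) (x : ℕ → ℝ) : ℕ → ℝ :=
  fun m => if m % k = j then x (m / k) else 0

/-- The quasi-norm `‖ξ‖_{X_inf} = inf_{σ ∈ Π} ‖S_σ ξ‖_X`. -/
def XinfN (XN : (ℕ → ℝ) → ℝ≥0∞) (x : ℕ → ℝ) : ℝ≥0∞ :=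
  ⨅ σ : Equiv.Perm ℕ, XN fun n => x (σ n)

/-- `XN` is (the extended norm of) a Banach sequence space: a lattice norm on
real sequences, ordered coordinatewise, containing the unit vectors. -/
def IsBanachSeqSpace (XN : (ℕ → ℝ) → ℝ≥0∞) : Prop :=
  (∀ x y, XN (x + y) ≤ XN x + XN y) ∧
  (∀ (c : ℝ) (x), XN (c • x) = ENNReal.ofReal |c| * XN x) ∧
  (∀ x, XN x = 0 → x = 0) ∧
  (∀ x y, (∀ n, |x n| ≤ |y n|) → XN x ≤ XN y) ∧
  (∀ n : ℕ, XN (fun m => if m = n then 1 else 0) < ⊤)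

/-- `X` is `p`-convex with constant `M`. -/
def PConvex (XN : (ℕ → ℝ) → ℝ≥0∞) (p M : ℝ) : Prop :=
  ∀ (k : ℕ) (x : Fin k → ℕ → ℝ),
    XN (fun n => (∑ j, |x j n| ^ p) ^ (1 / p)) ≤
      ENNReal.ofReal M * (∑ j, XN (x j) ^ p) ^ (1 / p)

/-- `X` is `q`-concave with constant `M`. -/
def QConcave (XN : (ℕ → ℝ) → ℝ≥0∞) (q M : ℝ) : Prop :=
  ∀ (k : ℕ) (x : Fin k → ℕ → ℝ),
    (∑ j, XN (x j) ^ q) ^ (1 / q) ≤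
      ENNReal.ofReal M * XN (fun n => (∑ j, |x j n| ^ q) ^ (1 / q))

/-- `max_{0 ≤ j < k} ‖L_k^j‖ ≤ C k^a`. -/
def LBound (XN : (ℕ → ℝ) → ℝ≥0∞) (C a : ℝ) : Prop :=
  ∀ k j : ℕ, j < k → ∀ x : ℕ → ℝ,
    XN (Lmap k j x) ≤ ENNReal.ofReal (C * (k : ℝ) ^ a) * XN x

/-- disjointly supported family -/
def DisjSupp {k : ℕ} (x : Fin k → ℕ → ℝ) : Prop :=
  ∀ i j, i ≠ j → ∀ n, x i n = 0 ∨ x j n = 0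

/-- membership in `c₀₀` -/
def FinSupp (x : ℕ → ℝ) : Prop := (Function.support x).Finite

/-! ### Disjoint arithmetic progressions and random draws -/

/-- Pairwise disjoint arithmetic progressions, the `i`-th of modulus of order at most `i ^ (1 + η)`.
With `B = 2 ^ d`, `d > 1 / η` and `e = log_B (i + 1)`, the residue read from its lowest binary
digit starts with the self-delimiting prefix `1…10` of length `e + 1` and continues with the
`d (e + 1)` digits of `i + 1`. -/
lemma exists_progressions {η : ℝ} (hη : 0 < η) :
    ∃ (D : ℝ) (K c : ℕ → ℕ), 0 < D ∧ (∀ i, c i < K i) ∧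
      (∀ i j, i ≠ j → ∀ b b', K i * b + c i ≠ K j * b' + c j) ∧
      ∀ i, (K i : ℝ) ≤ D * ((i : ℝ) + 1) ^ (1 + η) := by
  obtain ⟨d, hd⟩ := exists_nat_gt (1 / η)
  have hd0 : 0 < d := by
    have : (0 : ℝ) < d := lt_trans (by positivity) hd
    exact_mod_cast this
  set B := 2 ^ d with hB
  have hB1 : 1 < B := Nat.one_lt_two_pow hd0.ne'
  let e : ℕ → ℕ := fun i => Nat.log B (i + 1)
  have hlt : ∀ i, i + 1 < B ^ (e i + 1) := fun i => Nat.lt_pow_succ_log_self hB1 _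
  have hle : ∀ i, B ^ e i ≤ i + 1 := fun i => Nat.pow_log_le_self B (by omega)
  let K : ℕ → ℕ := fun i => 2 ^ (e i + 1) * B ^ (e i + 1)
  let c : ℕ → ℕ := fun i => 2 ^ (e i + 1) * (i + 1) + (2 ^ e i - 1)
  -- The exponent `e i` can be read off from any member of the `i`-th progression.
  have key : ∀ i j b b', K i * b + c i = K j * b' + c j → e i ≤ e j := by
    intro i j b b' h
    by_contra! hlt'
    obtain ⟨f, hf⟩ := Nat.exists_eq_add_of_lt hlt'
    have h1 : (K i * b + c i) % 2 ^ (e j + 1) = 2 ^ (e j + 1) - 1 := by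
      have : K i * b + c i = 2 ^ (e j + 1) *
          (2 ^ (f + 1) * B ^ (e i + 1) * b + 2 ^ (f + 1) * (i + 1) + (2 ^ f - 1)) +
            (2 ^ (e j + 1) - 1) := by
        simp only [K, c, hf]
        have h2 : 1 ≤ 2 ^ f := Nat.one_le_two_pow
        have h3 : 1 ≤ 2 ^ (e j + 1) := Nat.one_le_two_pow
        have h4 : 1 ≤ 2 ^ (e j + f + 1) := Nat.one_le_two_pow
        zify [h2, h3, h4]
        ring
      rw [this, Nat.mul_add_mod, Nat.mod_eq_of_lt (by have : 0 < 2 ^ (e j + 1) := by positivity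
                                                      omega)]
    have h2 : (K j * b' + c j) % 2 ^ (e j + 1) = 2 ^ e j - 1 := by
      have : K j * b' + c j = 2 ^ (e j + 1) * (B ^ (e j + 1) * b' + (j + 1)) + (2 ^ e j - 1) := by
        simp only [K, c]; ring
      have h5 : 0 < 2 ^ e j := by positivity
      rw [this, Nat.mul_add_mod, Nat.mod_eq_of_lt (by rw [pow_succ]; omega)]
    rw [h, h2, pow_succ] at h1
    have h5 : 0 < 2 ^ e j := by positivity
    omega
  have hcK : ∀ i, c i < K i := by
    intro i
    have h5 : 0 < 2 ^ e i := by positivity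
    calc c i < 2 ^ (e i + 1) * (i + 1) + 2 ^ (e i + 1) := by
          simp only [c, pow_succ]; omega
      _ = 2 ^ (e i + 1) * (i + 1 + 1) := by ring
      _ ≤ _ := Nat.mul_le_mul_left _ (hlt i)
  refine ⟨(B : ℝ) ^ (1 + η), K, c, by positivity, hcK, ?_, ?_⟩
  · intro i j hij b b' h
    have he : e i = e j := le_antisymm (key _ _ _ _ h) (key _ _ _ _ h.symm)
    have hK : K i = K j := by simp only [K, he]
    have h1 := congrArg (· % K i) h
    simp only [Nat.mul_add_mod] at h1
    rw [Nat.mod_eq_of_lt (hcK i), hK, Nat.mul_add_mod, Nat.mod_eq_of_lt (hcK j)] at h1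
    simp only [c, he] at h1
    have h2 := Nat.eq_of_mul_eq_mul_left (by positivity) (Nat.add_right_cancel h1)
    omega
  · intro i
    have hBe : (B : ℝ) ^ (e i + 1) ≤ B * ((i : ℝ) + 1) := by
      rw [pow_succ, mul_comm]
      gcongr
      exact_mod_cast hle i
    have h2 : (2 : ℝ) ≤ (B : ℝ) ^ η := by
      have : (B : ℝ) ^ η = (2 : ℝ) ^ ((d : ℝ) * η) := by
        rw [hB]; push_cast
        rw [← Real.rpow_natCast, ← Real.rpow_mul (by norm_num)]
      rw [this]
      have h3 : 1 ≤ (d : ℝ) * η := by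
        rw [div_lt_iff₀ hη] at hd; exact hd.le
      calc (2 : ℝ) = 2 ^ (1 : ℝ) := by norm_num
        _ ≤ _ := Real.rpow_le_rpow_of_exponent_le (by norm_num) h3
    have hB0 : (0 : ℝ) < B := by positivity
    calc (K i : ℝ) = 2 ^ (e i + 1) * (B : ℝ) ^ (e i + 1) := by simp only [K]; push_cast; rfl
      _ ≤ ((B : ℝ) ^ η) ^ (e i + 1) * (B : ℝ) ^ (e i + 1) := by gcongr
      _ = ((B : ℝ) ^ (e i + 1)) ^ (1 + η) := by
        rw [Real.rpow_add (by positivity), Real.rpow_one, mul_comm, ← Real.rpow_natCast,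
          ← Real.rpow_natCast,
          ← Real.rpow_mul hB0.le, ← Real.rpow_mul hB0.le]
        congr 2; ring
      _ ≤ (B * ((i : ℝ) + 1)) ^ (1 + η) := by gcongr
      _ = _ := Real.mul_rpow hB0.le (by positivity)

/-- Draw independent indices `J 0, J 1, …` with law `P`. If `v` has mean `U > 0`, then with
probability at least `1 - exp (1 - l)` some draw satisfies `(i + 1) U ≤ l v (J i)`. -/
lemma prob_bound {k m : ℕ} (P v : Fin k → ℝ) (hP : ∀ j, 0 < P j) (hP1 : ∑ j, P j = 1)
    (hv : ∀ j, 0 ≤ v j) {U l : ℝ} (hU : 0 < U) (hUv : ∑ j, P j * v j = U) (hl : 0 < l)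
    (hm : ∀ j, l / P j ≤ m) :
    ∑ J : Fin m → Fin k, (∏ i, P (J i)) *
      (if ∀ i : Fin m, l * v (J i) < ((i : ℝ) + 1) * U then 1 else 0) ≤ Real.exp (1 - l) := by
  have h1 : ∑ J : Fin m → Fin k, (∏ i, P (J i)) *
      (if ∀ i : Fin m, l * v (J i) < ((i : ℝ) + 1) * U then (1 : ℝ) else 0)
      = ∏ i : Fin m, ∑ j, P j * (if l * v j < ((i : ℝ) + 1) * U then (1 : ℝ) else 0) := by
    rw [Finset.prod_univ_sum, Fintype.piFinset_univ]
    refine Finset.sum_congr rfl fun J _ => ?_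
    rw [Finset.prod_mul_distrib, Finset.prod_ite_zero]
    simp
  rw [h1]
  have h2 : ∀ i : Fin m, ∑ j, P j * (if l * v j < ((i : ℝ) + 1) * U then (1 : ℝ) else 0)
      ≤ Real.exp (-∑ j, P j * (if ((i : ℝ) + 1) * U ≤ l * v j then (1 : ℝ) else 0)) := by
    intro i
    have : ∑ j, P j * (if l * v j < ((i : ℝ) + 1) * U then (1 : ℝ) else 0)
        = -(∑ j, P j * (if ((i : ℝ) + 1) * U ≤ l * v j then (1 : ℝ) else 0)) + 1 := by
      refine Eq.trans ?_ (congrArg _ hP1)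
      rw [← Finset.sum_neg_distrib, ← Finset.sum_add_distrib]
      refine Finset.sum_congr rfl fun j _ => ?_
      by_cases h : l * v j < ((i : ℝ) + 1) * U
      · simp [h, not_le.2 h]
      · simp [h, not_lt.1 h]
    rw [this]
    exact Real.add_one_le_exp _
  refine (Finset.prod_le_prod (fun i _ => Finset.sum_nonneg fun j _ =>
    mul_nonneg (hP j).le (by split_ifs <;> norm_num)) fun i _ => h2 i).trans ?_
  rw [← Real.exp_sum, Real.exp_le_exp, Finset.sum_neg_distrib, Finset.sum_comm]
  have h3 : ∀ j, P j * (l * v j / U - 1)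
      ≤ ∑ i : Fin m, P j * (if ((i : ℝ) + 1) * U ≤ l * v j then (1 : ℝ) else 0) := by
    intro j
    rw [← Finset.mul_sum]
    refine mul_le_mul_of_nonneg_left ?_ (hP j).le
    have hx : 0 ≤ l * v j / U := div_nonneg (mul_nonneg hl.le (hv j)) hU.le
    have hfm : ⌊l * v j / U⌋₊ ≤ m := by
      have : l * v j / U ≤ m := by
        refine le_trans ?_ (hm j)
        rw [div_le_div_iff₀ hU (hP j), mul_assoc]
        refine mul_le_mul_of_nonneg_left ?_ hl.le
        rw [← hUv, mul_comm]
        exact Finset.single_le_sum (f := fun j => P j * v j)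
          (fun j _ => mul_nonneg (hP j).le (hv j)) (Finset.mem_univ j)
      exact_mod_cast (Nat.floor_le hx).trans this
    rw [Fin.sum_univ_eq_sum_range
      (fun i : ℕ => if ((i : ℝ) + 1) * U ≤ l * v j then (1 : ℝ) else 0) m]
    calc l * v j / U - 1 ≤ ⌊l * v j / U⌋₊ := by linarith [Nat.lt_floor_add_one (l * v j / U)]
      _ = ∑ i ∈ Finset.range ⌊l * v j / U⌋₊,
          (if ((i : ℝ) + 1) * U ≤ l * v j then (1 : ℝ) else 0) := by
        rw [Finset.sum_congr rfl (g := fun _ => (1 : ℝ))]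
        · simp
        · intro i hi
          rw [if_pos]
          rw [← le_div_iff₀ hU]
          refine le_trans ?_ (Nat.floor_le hx)
          exact_mod_cast Finset.mem_range.1 hi
      _ ≤ _ := Finset.sum_le_sum_of_subset_of_nonneg
        (Finset.range_subset_range.2 hfm) fun i _ _ => by split_ifs <;> norm_num
  have h4 : ∑ j, P j * (l * v j / U - 1) = l - 1 := by
    have : ∀ j, P j * (l * v j / U - 1) = l / U * (P j * v j) - P j := fun j => by ring
    simp only [this]
    rw [Finset.sum_sub_distrib, ← Finset.mul_sum, hUv, hP1, div_mul_cancel₀ _ hU.ne']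
  linarith [Finset.sum_le_sum fun j (_ : j ∈ Finset.univ) => h3 j]

/-- A map injective on a finite set of natural numbers extends to a permutation of `ℕ`. -/
lemma exists_perm_extending {S : Set ℕ} (hS : S.Finite) {φ : ℕ → ℕ} (hφ : Set.InjOn φ S) :
    ∃ τ : Equiv.Perm ℕ, ∀ n ∈ S, τ n = φ n := by
  obtain ⟨s, rfl⟩ := hS.exists_finset_coe
  have := Equiv.Perm.isMultiplyPretransitive ℕ s.card
  let f : Fin s.card ↪ ℕ := s.equivFin.symm.toEmbedding.trans (Function.Embedding.subtype _)
  let g : Fin s.card ↪ ℕ := ⟨fun i => φ (f i), fun i j h =>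
    f.injective (hφ (s.equivFin.symm i).2 (s.equivFin.symm j).2 h)⟩
  obtain ⟨τ, hτ⟩ := MulAction.exists_smul_eq (Equiv.Perm ℕ) f g
  refine ⟨τ, fun n hn => ?_⟩
  have h := DFunLike.congr_fun hτ (s.equivFin ⟨n, hn⟩)
  simpa [f, g] using h

lemma Lmap_apply {k j : ℕ} (hj : j < k) (x : ℕ → ℝ) (b : ℕ) : Lmap k j x (k * b + j) = x b := by
  have h1 : (k * b + j) % k = j := by rw [Nat.mul_add_mod, Nat.mod_eq_of_lt hj]
  have h2 : (k * b + j) / k = b := by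
    rw [Nat.mul_add_div (by omega), Nat.div_eq_of_lt hj, add_zero]
  simp [Lmap, h1, h2]

/-! ### Basic estimates for `X_inf` -/

section lattice

variable {XN : (ℕ → ℝ) → ℝ≥0∞}

lemma XinfN_mono (hX : IsBanachSeqSpace XN) {x y : ℕ → ℝ} (h : ∀ n, |x n| ≤ |y n|) :
    XinfN XN x ≤ XinfN XN y :=
  iInf_mono fun σ => hX.2.2.2.1 _ _ fun n => h (σ n)

lemma XinfN_smul (hX : IsBanachSeqSpace XN) (c : ℝ) (x : ℕ → ℝ) :
    XinfN XN (c • x) = ENNReal.ofReal |c| * XinfN XN x := by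
  unfold XinfN
  rw [ENNReal.mul_iInf fun h => absurd h ENNReal.ofReal_ne_top]
  exact iInf_congr fun σ => hX.2.1 c fun n => x (σ n)

lemma XinfN_zero (hX : IsBanachSeqSpace XN) : XinfN XN 0 = 0 := by
  simpa using XinfN_smul hX 0 0

lemma XinfN_lt_top (hX : IsBanachSeqSpace XN) {x : ℕ → ℝ} (hx : FinSupp x) :
    XinfN XN x < ⊤ := by
  refine lt_of_le_of_lt (iInf_le _ (Equiv.refl ℕ)) ?_
  have hsum : ∀ s : Finset ℕ,
      XN (∑ i ∈ s, x i • fun m => if m = i then (1 : ℝ) else 0) < ⊤ := by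
    intro s
    induction s using Finset.induction_on with
    | empty =>
      have := hX.2.1 0 0
      simp only [zero_smul, abs_zero, ENNReal.ofReal_zero, zero_mul] at this
      simp [this]
    | insert i s hi ih =>
      rw [Finset.sum_insert hi]
      refine (hX.1 _ _).trans_lt (ENNReal.add_lt_top.2 ⟨?_, ih⟩)
      rw [hX.2.1]
      exact ENNReal.mul_lt_top ENNReal.ofReal_lt_top (hX.2.2.2.2 i)
  refine lt_of_le_of_lt (hX.2.2.2.1 _ _ fun n => ?_) (hsum (Set.Finite.toFinset hx))
  have hn : x n ≠ 0 → n ∈ Set.Finite.toFinset hx := fun h => (Set.Finite.mem_toFinset hx).2 h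
  by_cases h : x n = 0
  · simp [h]
  · simp [Finset.sum_apply, hn h]

/-- The images under `L_K^c` of rearrangements of the `z i` along disjoint arithmetic progressions
dominate, after a permutation, any vector each of whose coordinates is bounded by that of
some `z i`. -/
lemma XinfN_le_of_progressions {p M C a : ℝ} (hX : IsBanachSeqSpace XN) (hp : 0 < p)
    (hconv : PConvex XN p M) (hL : LBound XN C a) {m : ℕ} (K c : Fin m → ℕ)
    (hc : ∀ i, c i < K i)
    (hdisj : ∀ i j, i ≠ j → ∀ b b', K i * b + c i ≠ K j * b' + c j)
    (z : Fin m → ℕ → ℝ) (t : Fin m → ℝ≥0∞) (hz : ∀ i, XinfN XN (z i) < t i)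
    (w : ℕ → ℝ) (hw : FinSupp w) (hwz : ∀ n, w n ≠ 0 → ∃ i, |w n| ≤ |z i n|) :
    XinfN XN w ≤ ENNReal.ofReal M *
      (∑ i, (ENNReal.ofReal (C * (K i : ℝ) ^ a) * t i) ^ p) ^ (1 / p) := by
  have hσ : ∀ i, ∃ σ : Equiv.Perm ℕ, XN (fun n => z i (σ n)) < t i := fun i => iInf_lt_iff.1 (hz i)
  choose σ hσ using hσ
  classical
  by_cases hm : m = 0
  · subst hm
    have hw0 : w = 0 := by
      funext n
      by_contra h
      exact (hwz n h).choose.elim0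
    rw [hw0, XinfN_zero hX]
    exact zero_le
  have : Nonempty (Fin m) := ⟨⟨0, Nat.pos_of_ne_zero hm⟩⟩
  choose! ι hι using hwz
  let φ : ℕ → ℕ := fun n => K (ι n) * (σ (ι n)).symm n + c (ι n)
  have hφ : Set.InjOn φ (Function.support w) := by
    intro n _ n' _ h
    by_cases hi : ι n = ι n'
    · simp only [φ, hi] at h
      have h1 := Nat.eq_of_mul_eq_mul_left ((Nat.zero_le _).trans_lt (hc (ι n')))
        (Nat.add_right_cancel h)
      exact (σ (ι n')).symm.injective h1
    · exact absurd h (hdisj _ _ hi _ _)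
  obtain ⟨τ, hτ⟩ := exists_perm_extending hw hφ
  let y : Fin m → ℕ → ℝ := fun i => Lmap (K i) (c i) fun n => z i (σ i n)
  calc XinfN XN w ≤ XN fun n => w (τ.symm n) := iInf_le _ τ.symm
    _ ≤ XN fun n => (∑ i, |y i n| ^ p) ^ (1 / p) := by
      refine hX.2.2.2.1 _ _ fun n => ?_
      have hnn : 0 ≤ ∑ i, |y i n| ^ p := Finset.sum_nonneg fun i _ => by positivity
      by_cases h : w (τ.symm n) = 0
      · rw [h, abs_zero]; positivity
      have hn : φ (τ.symm n) = n := by rw [← hτ _ h]; simp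
      have hyφ : ∀ n', y (ι n') (φ n') = z (ι n') n' := fun n' => by
        simp only [y, φ]
        rw [Lmap_apply (hc _)]
        simp
      have hy : y (ι (τ.symm n)) n = z (ι (τ.symm n)) (τ.symm n) := by
        rw [← hyφ (τ.symm n), hn]
      refine (hι _ h).trans ?_
      rw [abs_of_nonneg (by positivity : 0 ≤ (∑ i, |y i n| ^ p) ^ (1 / p)), ← hy]
      rw [← Real.rpow_le_rpow_iff (abs_nonneg _) (by positivity) hp, ← Real.rpow_mul hnn,
        one_div_mul_cancel hp.ne', Real.rpow_one]
      exact Finset.single_le_sum (f := fun i => |y i n| ^ p) (fun i _ => by positivity)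
        (Finset.mem_univ _)
    _ ≤ ENNReal.ofReal M * (∑ i, XN (y i) ^ p) ^ (1 / p) := hconv m y
    _ ≤ _ := by
      gcongr with i
      exact (hL _ _ (hc i) _).trans (mul_le_mul_right (hσ i).le _)

/-- `q`-concavity passes to `X_inf`, here in a form with weights: a single permutation that is
nearly optimal for `v` bounds the `X_inf` norms of all `y ω` at once. -/
lemma XinfN_qconcave {q M' : ℝ} (hX : IsBanachSeqSpace XN) (hq : 0 < q)
    (hconc : QConcave XN q M') {Ω : Type} [Fintype Ω] (P : Ω → ℝ) (hP : ∀ ω, 0 ≤ P ω)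
    (y : Ω → ℕ → ℝ) (v : ℕ → ℝ) (hv : ∀ n, ∑ ω, P ω * |y ω n| ^ q ≤ |v n| ^ q) :
    ∑ ω, ENNReal.ofReal (P ω) * XinfN XN (y ω) ^ q ≤ (ENNReal.ofReal M' * XinfN XN v) ^ q := by
  rw [← ENNReal.rpow_inv_le_iff hq]
  unfold XinfN
  rw [ENNReal.mul_iInf fun h => absurd h ENNReal.ofReal_ne_top]
  refine le_iInf fun σ => ?_
  let e := Fintype.equivFin Ω
  have h := hconc (Fintype.card Ω) fun i n => P (e.symm i) ^ (1 / q) * y (e.symm i) (σ n)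
  rw [e.symm.sum_comp fun ω => XN (fun n => P ω ^ (1 / q) * y ω (σ n)) ^ q] at h
  have h2 : ∀ n, ∑ i, |P (e.symm i) ^ (1 / q) * y (e.symm i) (σ n)| ^ q
      = ∑ ω, P ω * |y ω (σ n)| ^ q := by
    intro n
    rw [e.symm.sum_comp fun ω => |P ω ^ (1 / q) * y ω (σ n)| ^ q]
    refine Finset.sum_congr rfl fun ω _ => ?_
    rw [abs_mul, abs_of_nonneg (Real.rpow_nonneg (hP ω) _),
      Real.mul_rpow (Real.rpow_nonneg (hP ω) _) (abs_nonneg _),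
      ← Real.rpow_mul (hP ω), one_div_mul_cancel hq.ne', Real.rpow_one]
  simp only [h2] at h
  rw [← one_div]
  refine le_trans ?_ (h.trans (mul_le_mul_right (hX.2.2.2.1 _ _ fun n => ?_) _))
  · gcongr with ω
    have h3 : XN (fun n => P ω ^ (1 / q) * y ω (σ n))
        = ENNReal.ofReal (P ω ^ (1 / q)) * XN (fun n => y ω (σ n)) := by
      rw [← abs_of_nonneg (Real.rpow_nonneg (hP ω) (1 / q)), ← hX.2.1]
      rw [abs_of_nonneg (Real.rpow_nonneg (hP ω) (1 / q))]
      rfl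
    rw [h3, ENNReal.mul_rpow_of_nonneg _ _ hq.le,
      ENNReal.ofReal_rpow_of_nonneg (Real.rpow_nonneg (hP ω) _) hq.le,
      ← Real.rpow_mul (hP ω), one_div_mul_cancel hq.ne', Real.rpow_one]
    gcongr
    exact iInf_le _ σ
  · have hnn : 0 ≤ ∑ ω, P ω * |y ω (σ n)| ^ q :=
      Finset.sum_nonneg fun ω _ => mul_nonneg (hP ω) (by positivity)
    rw [abs_of_nonneg (by positivity), ← Real.rpow_le_rpow_iff (by positivity) (abs_nonneg _) hq,
      ← Real.rpow_mul hnn, one_div_mul_cancel hq.ne', Real.rpow_one]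
    exact hv _

/-- The vector `e_0` is fixed by every `L_k^0`, so `C k ^ a ≥ 1` for all `k ≥ 1`. -/
lemma LBound.nonneg {C a : ℝ} (hX : IsBanachSeqSpace XN) (hL : LBound XN C a) : 0 ≤ a := by
  by_contra! ha
  let e : ℕ → ℝ := fun m => if m = 0 then 1 else 0
  have he : XN e ≠ 0 := fun h => by simpa [e] using congrFun (hX.2.2.1 e h) 0
  have h1 : ∀ k : ℕ, 0 < k → 1 ≤ C * (k : ℝ) ^ a := by
    intro k hk
    have h := hL k 0 hk e
    have h2 : Lmap k 0 e = e := by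
      funext m
      simp only [Lmap, e]
      by_cases hm : m = 0
      · simp [hm]
      · simp only [hm, if_false]
        split_ifs with h3 h4
        · have := Nat.div_add_mod m k
          rw [h3, h4] at this
          simp at this; omega
        all_goals rfl
    rw [h2] at h
    by_contra! h3
    refine absurd h (not_le.2 ?_)
    calc _ < 1 * XN e := by
          refine ENNReal.mul_lt_mul_left he (hX.2.2.2.2 0).ne ?_
          rwa [ENNReal.ofReal_lt_one]
      _ = XN e := one_mul _
  have h2 := ((tendsto_rpow_neg_atTop (neg_pos.2 ha)).comp tendsto_natCast_atTop_atTop).const_mul C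
  simp only [neg_neg, mul_zero] at h2
  have h3 := (h2.eventually (gt_mem_nhds one_pos)).and (Filter.eventually_gt_atTop 0)
  obtain ⟨k, hk, hk0⟩ := h3.exists
  exact absurd (h1 k hk0) (not_le.2 hk)

/-- Real-valued form of `XinfN_le_of_progressions`, raised to the power `p`. -/
lemma XinfN_rpow_le_of_progressions {p M C a : ℝ} (hX : IsBanachSeqSpace XN) (hp : 0 < p)
    (hM : 0 ≤ M) (hC : 0 ≤ C)
    (hconv : PConvex XN p M) (hL : LBound XN C a) {m : ℕ} (K c : Fin m → ℕ)
    (hc : ∀ i, c i < K i)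
    (hdisj : ∀ i j, i ≠ j → ∀ b b', K i * b + c i ≠ K j * b' + c j)
    (z : Fin m → ℕ → ℝ) (t : Fin m → ℝ) (ht : ∀ i, 0 ≤ t i)
    (hz : ∀ i, XinfN XN (z i) < ENNReal.ofReal (t i))
    (w : ℕ → ℝ) (hw : FinSupp w) (hwz : ∀ n, w n ≠ 0 → ∃ i, |w n| ≤ |z i n|) :
    (XinfN XN w).toReal ^ p ≤ M ^ p * ∑ i, (C * (K i : ℝ) ^ a * t i) ^ p := by
  have h := XinfN_le_of_progressions hX hp hconv hL K c hc hdisj z _ hz w hw hwz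
  have h0 : ∀ i, 0 ≤ C * (K i : ℝ) ^ a := fun i => by positivity
  have h00 : ∀ i, 0 ≤ C * (K i : ℝ) ^ a * t i := fun i => mul_nonneg (h0 i) (ht i)
  have hs : 0 ≤ ∑ i, (C * (K i : ℝ) ^ a * t i) ^ p :=
    Finset.sum_nonneg fun i _ => Real.rpow_nonneg (h00 i) _
  have h1 : ENNReal.ofReal M *
      (∑ i, (ENNReal.ofReal (C * (K i : ℝ) ^ a) * ENNReal.ofReal (t i)) ^ p) ^ (1 / p)
      = ENNReal.ofReal (M * (∑ i, (C * (K i : ℝ) ^ a * t i) ^ p) ^ (1 / p)) := by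
    rw [ENNReal.ofReal_mul hM, ← ENNReal.ofReal_rpow_of_nonneg hs (by positivity),
      ENNReal.ofReal_sum_of_nonneg fun i _ => Real.rpow_nonneg (h00 i) _]
    congr 3
    funext i
    rw [← ENNReal.ofReal_mul (h0 i), ENNReal.ofReal_rpow_of_nonneg (h00 i) hp.le]
  rw [h1] at h
  have h2 := ENNReal.toReal_le_of_le_ofReal (by positivity) h
  calc (XinfN XN w).toReal ^ p
      ≤ (M * (∑ i, (C * (K i : ℝ) ^ a * t i) ^ p) ^ (1 / p)) ^ p := by gcongr
    _ = _ := by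
      rw [Real.mul_rpow hM (by positivity), ← Real.rpow_mul hs, one_div_mul_cancel hp.ne',
        Real.rpow_one]

/-! ### Lattice convexity -/

lemma finSupp_rpow_sum {k : ℕ} {r : ℝ} (hr : 0 < r) (P : Fin k → ℝ) (z : Fin k → ℕ → ℝ)
    (hz : ∀ j, FinSupp (z j)) : FinSupp fun n => (∑ j, P j * |z j n| ^ r) ^ (1 / r) := by
  refine (Set.finite_iUnion hz).subset fun n hn => ?_
  by_contra h
  simp only [Set.mem_iUnion, Function.mem_support, not_exists, not_not] at h
  refine hn ?_
  simp [Real.zero_rpow hr.ne', Real.zero_rpow (inv_ne_zero hr.ne'), h]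

/-- `r`-convexity of `X_inf` in normalised form. With random indices `J i` drawn from `P`, the
vector `(∑ j, P j |z j| ^ r) ^ (1 / r)` is dominated by `sup_i (l / (i + 1)) ^ (1 / r) |z (J i)|`
off a random set that contains each coordinate with small probability. The first part is
controlled by disjoint progressions; the second one is small by `q`-concavity and is absorbed into
the left-hand side. -/
lemma XinfN_normalized_convex {p q M M' C a r : ℝ} (hX : IsBanachSeqSpace XN)
    (hp : 0 < p) (hq : 0 < q) (hM : 0 < M) (hM' : 0 < M') (hC : 0 < C) (hr : 0 < r)
    (har : a + 1 / p < 1 / r)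
    (hconv : PConvex XN p M) (hconc : QConcave XN q M') (hL : LBound XN C a) :
    ∃ R : ℝ, 0 < R ∧ ∀ (k : ℕ) (P : Fin k → ℝ) (z : Fin k → ℕ → ℝ), (∀ j, 0 < P j) →
      ∑ j, P j = 1 → (∀ j, FinSupp (z j)) → (∀ j, XinfN XN (z j) < 1) →
      XinfN XN (fun n => (∑ j, P j * |z j n| ^ r) ^ (1 / r)) ≤ ENNReal.ofReal R := by
  have ha := hL.nonneg hX
  obtain ⟨η, hη, hηa⟩ : ∃ η : ℝ, 0 < η ∧ a * (1 + η) + 1 / p < 1 / r := by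
    refine ⟨(1 / r - (a + 1 / p)) / (a + 1), div_pos (by linarith) (by linarith), ?_⟩
    have : a * ((1 / r - (a + 1 / p)) / (a + 1)) < 1 / r - (a + 1 / p) := by
      rw [mul_div_assoc', div_lt_iff₀ (by linarith)]
      nlinarith
    linarith
  obtain ⟨D, K, c, hD, hcK, hdisj, hKD⟩ := exists_progressions hη
  have hK0 : (0 : ℝ) < K 0 := by exact_mod_cast (Nat.zero_le _).trans_lt (hcK 0)
  -- `e` is small enough for the absorption, and `l` large enough for an exceptional
  -- probability at most `e ^ q`.
  obtain ⟨e, he, heq⟩ : ∃ e : ℝ, 0 < e ∧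
      M * (C * (K 0 : ℝ) ^ a * (2 * M' * e)) = (1 / 2) ^ (1 / p) := by
    refine ⟨(1 / 2) ^ (1 / p) / (M * (C * (K 0 : ℝ) ^ a * (2 * M'))), by positivity, ?_⟩
    field_simp
  obtain ⟨l, hl, hle⟩ : ∃ l : ℝ, 0 < l ∧ Real.exp (1 - l) ≤ e ^ q := by
    refine ⟨max 1 (1 - Real.log (e ^ q)), by positivity, ?_⟩
    rw [← Real.le_log_iff_exp_le (by positivity)]
    linarith [le_max_right 1 (1 - Real.log (e ^ q))]
  let s : ℝ := p * (1 / r - a * (1 + η))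
  have hs : 1 < s := by
    have : 1 / p < 1 / r - a * (1 + η) := by linarith
    rw [div_lt_iff₀ hp] at this
    simp only [s]; linarith
  have hsum : Summable fun i : ℕ => ((i : ℝ) + 1) ^ (-s) := by
    have := (summable_nat_add_iff 1).2 (Real.summable_nat_rpow.2 (by linarith : -s < -1))
    simpa using this
  let G : ℝ := (C * (D * 2 ^ (1 + η)) ^ a * l ^ (1 / r)) ^ p
  have hG : 0 < G := by positivity
  have hterm : ∀ i : ℕ, (C * (K (i + 1) : ℝ) ^ a * (l / ((i : ℝ) + 1)) ^ (1 / r)) ^ p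
      ≤ G * ((i : ℝ) + 1) ^ (-s) := by
    intro i
    have hi : (0 : ℝ) < (i : ℝ) + 1 := by positivity
    have h1 : (K (i + 1) : ℝ) ≤ D * 2 ^ (1 + η) * ((i : ℝ) + 1) ^ (1 + η) := by
      refine (hKD (i + 1)).trans ?_
      rw [mul_assoc, ← Real.mul_rpow (by norm_num) hi.le]
      gcongr
      push_cast
      linarith [(Nat.cast_nonneg i : (0 : ℝ) ≤ i)]
    calc (C * (K (i + 1) : ℝ) ^ a * (l / ((i : ℝ) + 1)) ^ (1 / r)) ^ p
        ≤ (C * (D * 2 ^ (1 + η) * ((i : ℝ) + 1) ^ (1 + η)) ^ a *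
            (l / ((i : ℝ) + 1)) ^ (1 / r)) ^ p := by gcongr
      _ = (C * (D * 2 ^ (1 + η)) ^ a * l ^ (1 / r) *
            ((i : ℝ) + 1) ^ ((1 + η) * a - 1 / r)) ^ p := by
        congr 1
        rw [Real.mul_rpow (by positivity) (by positivity), Real.div_rpow hl.le hi.le,
          Real.rpow_sub hi, ← Real.rpow_mul hi.le]
        ring
      _ = _ := by
        rw [Real.mul_rpow (by positivity) (by positivity), ← Real.rpow_mul hi.le]
        simp only [G, s]
        congr 2
        ring
  let T : ℝ := ∑' i : ℕ, ((i : ℝ) + 1) ^ (-s)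
  have hT : 0 ≤ T := tsum_nonneg fun i => by positivity
  refine ⟨(2 * (M ^ p * (G * T))) ^ (1 / p) + 1, by positivity, ?_⟩
  intro k P z hP hP1 hz hz1
  set u : ℕ → ℝ := fun n => (∑ j, P j * |z j n| ^ r) ^ (1 / r) with hu
  have hU0 : ∀ n, 0 ≤ ∑ j, P j * |z j n| ^ r := fun n =>
    Finset.sum_nonneg fun j _ => mul_nonneg (hP j).le (by positivity)
  have hu0 : ∀ n, 0 ≤ u n := fun n => Real.rpow_nonneg (hU0 n) _
  have huF : FinSupp u := finSupp_rpow_sum hr P z hz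
  have hutop := XinfN_lt_top hX huF
  set x : ℝ := (XinfN XN u).toReal with hx
  have hxu : XinfN XN u = ENNReal.ofReal x := (ENNReal.ofReal_toReal hutop.ne).symm
  rw [hxu]
  refine ENNReal.ofReal_le_ofReal ?_
  have hx0 : 0 ≤ x := ENNReal.toReal_nonneg
  rcases hx0.eq_or_lt with h | hxpos
  · rw [← h]; positivity
  obtain ⟨m, hm⟩ := exists_nat_ge (∑ j, l / P j)
  have hmj : ∀ j, l / P j ≤ m := fun j =>
    (Finset.single_le_sum (f := fun j => l / P j) (fun j _ => (div_pos hl (hP j)).le)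
      (Finset.mem_univ j)).trans hm
  classical
  -- the part of `u` not dominated by the rescaled draws
  let y : (Fin m → Fin k) → ℕ → ℝ := fun J n =>
    if ∀ i : Fin m, l * |z (J i) n| ^ r < ((i : ℝ) + 1) * ∑ j, P j * |z j n| ^ r then u n else 0
  have hPJ : ∀ J : Fin m → Fin k, 0 < ∏ i, P (J i) := fun J => Finset.prod_pos fun i _ => hP _
  have hPJ1 : ∑ J : Fin m → Fin k, ∏ i, P (J i) = 1 := by
    rw [← Fintype.piFinset_univ, ← Finset.prod_univ_sum]
    simp [hP1]
  have hy : ∀ n, ∑ J : Fin m → Fin k, (∏ i, P (J i)) * |y J n| ^ q ≤ |(e • u) n| ^ q := by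
    intro n
    have h1 : ∀ J, |y J n| ^ q = (if ∀ i : Fin m, l * |z (J i) n| ^ r <
        ((i : ℝ) + 1) * ∑ j, P j * |z j n| ^ r then 1 else 0) * u n ^ q := by
      intro J
      simp only [y]
      split_ifs
      · rw [abs_of_nonneg (hu0 n), one_mul]
      · rw [abs_zero, Real.zero_rpow hq.ne', zero_mul]
    simp only [h1, ← mul_assoc]
    rw [← Finset.sum_mul, Pi.smul_apply, smul_eq_mul, abs_of_nonneg (mul_nonneg he.le (hu0 n)),
      Real.mul_rpow he.le (hu0 n)]
    rcases (hU0 n).eq_or_lt with h | h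
    · have : u n = 0 := by
        simp only [hu]
        rw [← h, Real.zero_rpow (by positivity)]
      rw [this, Real.zero_rpow hq.ne', mul_zero, mul_zero]
    · refine mul_le_mul_of_nonneg_right ?_ (Real.rpow_nonneg (hu0 n) _)
      exact (prob_bound P (fun j => |z j n| ^ r) hP hP1 (fun j => by positivity) h rfl hl
        hmj).trans hle
  have hconc' := XinfN_qconcave hX hq hconc _ (fun J => (hPJ J).le) y (e • u) hy
  rw [XinfN_smul hX, hxu, abs_of_pos he, ← ENNReal.ofReal_mul he.le, ← ENNReal.ofReal_mul hM'.le]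
    at hconc'
  obtain ⟨J, hJ⟩ : ∃ J, XinfN XN (y J) ≤ ENNReal.ofReal (M' * (e * x)) := by
    have hne : (Finset.univ : Finset (Fin m → Fin k)).Nonempty := by
      by_contra h
      rw [Finset.not_nonempty_iff_eq_empty] at h
      rw [h] at hPJ1
      simp at hPJ1
    have h1 : ENNReal.ofReal (M' * (e * x)) ^ q = ∑ J : Fin m → Fin k,
        ENNReal.ofReal (∏ i, P (J i)) * ENNReal.ofReal (M' * (e * x)) ^ q := by
      rw [← Finset.sum_mul, ← ENNReal.ofReal_sum_of_nonneg fun J _ => (hPJ J).le, hPJ1]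
      simp
    rw [h1] at hconc'
    obtain ⟨J, -, hJ⟩ := ENNReal.exists_le_of_sum_le hne hconc'
    refine ⟨J, ?_⟩
    rw [ENNReal.mul_le_mul_iff_right (by simpa using hPJ J) ENNReal.ofReal_ne_top] at hJ
    exact (ENNReal.rpow_le_rpow_iff hq).1 hJ
  have hmain := XinfN_rpow_le_of_progressions hX hp hM.le hC.le hconv hL (m := m + 1)
    (fun i => K i) (fun i => c i) (fun i => hcK i)
    (fun i j hij => hdisj i j fun h => hij (Fin.ext h))
    (Fin.cons (y J) fun i : Fin m => (l / ((i : ℝ) + 1)) ^ (1 / r) • z (J i))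
    (Fin.cons (2 * M' * e * x) fun i : Fin m => (l / ((i : ℝ) + 1)) ^ (1 / r))
    (by
      refine Fin.cases ?_ fun i => ?_
      · simp only [Fin.cons_zero]; positivity
      · simp only [Fin.cons_succ]; positivity)
    (by
      refine Fin.cases ?_ fun i => ?_
      · simp only [Fin.cons_zero]
        refine hJ.trans_lt ((ENNReal.ofReal_lt_ofReal_iff (by positivity)).2 ?_)
        have : 0 < M' * (e * x) := by positivity
        linarith
      · simp only [Fin.cons_succ]
        have h1 : 0 < (l / (((i : ℕ) : ℝ) + 1)) ^ (1 / r) := by positivity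
        rw [XinfN_smul hX, abs_of_pos h1]
        calc _ < ENNReal.ofReal ((l / (((i : ℕ) : ℝ) + 1)) ^ (1 / r)) * 1 :=
              ENNReal.mul_lt_mul_right (by simpa using h1) ENNReal.ofReal_ne_top (hz1 _)
          _ = _ := mul_one _)
    u huF
    (by
      intro n _
      by_cases h : ∀ i : Fin m, l * |z (J i) n| ^ r < ((i : ℝ) + 1) * ∑ j, P j * |z j n| ^ r
      · refine ⟨0, ?_⟩
        simp only [Fin.cons_zero, y]
        rw [if_pos h]
      · push Not at h
        obtain ⟨i, hi⟩ := h
        refine ⟨i.succ, ?_⟩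
        have hi1 : (0 : ℝ) < ((i : ℕ) : ℝ) + 1 := by positivity
        simp only [Fin.cons_succ, Pi.smul_apply, smul_eq_mul]
        rw [abs_mul, abs_of_nonneg (hu0 n), abs_of_nonneg (by positivity)]
        calc u n ≤ (l / (((i : ℕ) : ℝ) + 1) * |z (J i) n| ^ r) ^ (1 / r) := by
              refine Real.rpow_le_rpow (hU0 n) ?_ (by positivity)
              rw [div_mul_eq_mul_div, le_div_iff₀ hi1]
              linarith
          _ = _ := by
            rw [Real.mul_rpow (by positivity) (by positivity), ← Real.rpow_mul (abs_nonneg _),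
              mul_one_div_cancel hr.ne', Real.rpow_one])
  rw [Fin.sum_univ_succ] at hmain
  simp only [Fin.cons_zero, Fin.cons_succ, Fin.val_zero, Fin.val_succ, mul_add] at hmain
  have h1 : M ^ p * (C * (K 0 : ℝ) ^ a * (2 * M' * e * x)) ^ p = 1 / 2 * x ^ p := by
    rw [← Real.mul_rpow hM.le (by positivity), ← mul_assoc (C * (K 0 : ℝ) ^ a), ← mul_assoc M,
      heq, Real.mul_rpow (by positivity) hx0, ← Real.rpow_mul (by norm_num),
      one_div_mul_cancel hp.ne', Real.rpow_one]
  have h2 : ∑ i : Fin m, (C * (K ((i : ℕ) + 1) : ℝ) ^ a * (l / (((i : ℕ) : ℝ) + 1)) ^ (1 / r)) ^ p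
      ≤ G * T := by
    rw [Fin.sum_univ_eq_sum_range
      (fun i : ℕ => (C * (K (i + 1) : ℝ) ^ a * (l / ((i : ℝ) + 1)) ^ (1 / r)) ^ p) m]
    refine (Finset.sum_le_sum fun i _ => hterm i).trans ?_
    rw [← Finset.mul_sum]
    exact mul_le_mul_of_nonneg_left (hsum.sum_le_tsum _ fun i _ => by positivity) hG.le
  have h3 : x ^ p ≤ 2 * (M ^ p * (G * T)) := by
    have := mul_le_mul_of_nonneg_left h2 (by positivity : 0 ≤ M ^ p)
    linarith
  have h4 : x ≤ (2 * (M ^ p * (G * T))) ^ (1 / p) := by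
    rw [one_div]
    exact (Real.le_rpow_inv_iff_of_pos hx0 (by positivity) hp).2 h3
  linarith

/-- Lattice `r`-convexity of `X_inf` on finitely supported sequences. -/
lemma XinfN_convex {p q M M' C a r : ℝ} (hX : IsBanachSeqSpace XN)
    (hp : 0 < p) (hq : 0 < q) (hM : 0 < M) (hM' : 0 < M') (hC : 0 < C) (hr : 0 < r)
    (har : a + 1 / p < 1 / r)
    (hconv : PConvex XN p M) (hconc : QConcave XN q M') (hL : LBound XN C a) :
    ∃ R : ℝ, 0 < R ∧ ∀ (k : ℕ) (x : Fin k → ℕ → ℝ), (∀ j, FinSupp (x j)) →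
      XinfN XN (fun n => (∑ j, |x j n| ^ r) ^ (1 / r)) ≤
        ENNReal.ofReal R * (∑ j, XinfN XN (x j) ^ r) ^ (1 / r) := by
  obtain ⟨R, hR, H⟩ := XinfN_normalized_convex hX hp hq hM hM' hC hr har hconv hconc hL
  refine ⟨R, hR, fun k x hx => ?_⟩
  rcases Nat.eq_zero_or_pos k with rfl | hk
  · have : (fun n => (∑ j : Fin 0, |x j n| ^ r) ^ (1 / r)) = 0 := by
      funext n; simp [Real.zero_rpow (inv_ne_zero hr.ne')]
    rw [this, XinfN_zero hX]
    exact zero_le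
  have : Nonempty (Fin k) := ⟨⟨0, hk⟩⟩
  obtain ⟨α, hα0, hα⟩ : ∃ α : Fin k → ℝ, (∀ j, 0 ≤ α j) ∧
      ∀ j, XinfN XN (x j) = ENNReal.ofReal (α j) :=
    ⟨fun j => (XinfN XN (x j)).toReal, fun j => ENNReal.toReal_nonneg, fun j =>
      (ENNReal.ofReal_toReal (XinfN_lt_top hX (hx j)).ne).symm⟩
  -- The norms `α j` may vanish, hence the perturbation by `ε`.
  have key : ∀ ε : ℝ, 0 < ε → XinfN XN (fun n => (∑ j, |x j n| ^ r) ^ (1 / r)) ≤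
      ENNReal.ofReal (R * (∑ j, (α j + ε) ^ r) ^ (1 / r)) := by
    intro ε hε
    have ht : ∀ j, 0 < α j + ε := fun j => by linarith [hα0 j]
    set T := ∑ j, (α j + ε) ^ r with hT
    have hT0 : 0 < T := Finset.sum_pos (fun j _ => Real.rpow_pos_of_pos (ht j) r)
      Finset.univ_nonempty
    have h := H k (fun j => (α j + ε) ^ r / T) (fun j => (α j + ε)⁻¹ • x j)
      (fun j => div_pos (Real.rpow_pos_of_pos (ht j) r) hT0)
      (by rw [← Finset.sum_div, div_self hT0.ne'])
      (fun j => (hx j).subset (Function.support_const_smul_subset _ _))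
      (fun j => by
        rw [XinfN_smul hX, hα, ← ENNReal.ofReal_mul (abs_nonneg _), ENNReal.ofReal_lt_one,
          abs_of_pos (inv_pos.2 (ht j)), inv_mul_lt_iff₀ (ht j)]
        linarith)
    have h1 : (fun n => (∑ j, |x j n| ^ r) ^ (1 / r)) = T ^ (1 / r) • fun n =>
        (∑ j, (α j + ε) ^ r / T * |((α j + ε)⁻¹ • x j) n| ^ r) ^ (1 / r) := by
      funext n
      have h2 : ∀ j, (α j + ε) ^ r / T * |((α j + ε)⁻¹ • x j) n| ^ r = |x j n| ^ r / T := by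
        intro j
        have := (Real.rpow_pos_of_pos (ht j) r).ne'
        rw [Pi.smul_apply, smul_eq_mul, abs_mul, abs_of_pos (inv_pos.2 (ht j)),
          Real.mul_rpow (inv_pos.2 (ht j)).le (abs_nonneg _), Real.inv_rpow (ht j).le]
        field_simp
      have h3 : 0 ≤ ∑ j, |x j n| ^ r := Finset.sum_nonneg fun j _ => by positivity
      rw [Pi.smul_apply, smul_eq_mul, Finset.sum_congr rfl fun j _ => h2 j]
      rw [← Finset.sum_div, ← Real.mul_rpow hT0.le (by positivity), mul_div_cancel₀ _ hT0.ne']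
    rw [h1, XinfN_smul hX, abs_of_pos (Real.rpow_pos_of_pos hT0 _), mul_comm R,
      ENNReal.ofReal_mul (by positivity)]
    exact mul_le_mul_right h _
  have hlim : Filter.Tendsto (fun ε : ℝ => ENNReal.ofReal (R * (∑ j, (α j + ε) ^ r) ^ (1 / r)))
      (nhdsWithin 0 (Set.Ioi 0)) (nhds (ENNReal.ofReal (R * (∑ j, (α j + 0) ^ r) ^ (1 / r)))) := by
    refine tendsto_nhdsWithin_of_tendsto_nhds (Continuous.tendsto ?_ 0)
    refine ENNReal.continuous_ofReal.comp (continuous_const.mul ?_)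
    refine Continuous.rpow_const ?_ fun _ => Or.inr (by positivity)
    exact continuous_finsetSum _ fun j _ =>
      (continuous_const.add continuous_id).rpow_const fun _ => Or.inr hr.le
  refine (ge_of_tendsto hlim (eventually_nhdsWithin_of_forall key)).trans_eq ?_
  have hs : 0 ≤ ∑ j, α j ^ r := Finset.sum_nonneg fun j _ => Real.rpow_nonneg (hα0 j) _
  simp only [add_zero, hα]
  rw [ENNReal.ofReal_mul hR.le, ← ENNReal.ofReal_rpow_of_nonneg hs (by positivity),
    ENNReal.ofReal_sum_of_nonneg fun j _ => Real.rpow_nonneg (hα0 j) _]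
  congr 3
  funext j
  rw [ENNReal.ofReal_rpow_of_nonneg (hα0 j) hr.le]

end lattice

/-! ### The equivalent norm -/

/-- The largest seminorm below `X_inf` on `c₀₀`: the infimum of `∑ ‖y‖_{X_inf}` over all
decompositions into finitely supported summands `y`, and `⊤` off `c₀₀`. -/
def XinfHull (XN : (ℕ → ℝ) → ℝ≥0∞) (x : ℕ → ℝ) : ℝ≥0∞ :=
  ⨅ (l : List (ℕ → ℝ)) (_ : ∀ y ∈ l, FinSupp y) (_ : l.sum = x), (l.map (XinfN XN)).sum

section hull

variable {XN : (ℕ → ℝ) → ℝ≥0∞}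

lemma XinfHull_le {l : List (ℕ → ℝ)} (hl : ∀ y ∈ l, FinSupp y) :
    XinfHull XN l.sum ≤ (l.map (XinfN XN)).sum :=
  iInf_le_of_le l <| iInf_le_of_le hl <| iInf_le_of_le rfl le_rfl

lemma XinfHull_add (x y : ℕ → ℝ) : XinfHull XN (x + y) ≤ XinfHull XN x + XinfHull XN y := by
  refine ENNReal.le_of_forall_pos_le_add fun ε hε h => ?_
  have hε2 : ((ε : ℝ≥0∞) / 2) ≠ 0 := by simpa using hε.ne'
  have h1 := ENNReal.lt_add_right (ENNReal.add_lt_top.1 h).1.ne hε2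
  have h2 := ENNReal.lt_add_right (ENNReal.add_lt_top.1 h).2.ne hε2
  conv at h1 => lhs; unfold XinfHull
  conv at h2 => lhs; unfold XinfHull
  simp only [iInf_lt_iff] at h1 h2
  obtain ⟨l, hl, rfl, h1⟩ := h1
  obtain ⟨l', hl', rfl, h2⟩ := h2
  have h3 := XinfHull_le (XN := XN) (l := l ++ l') (by
    intro z hz
    rcases List.mem_append.1 hz with hz | hz
    exacts [hl z hz, hl' z hz])
  rw [List.sum_append, List.map_append, List.sum_append] at h3
  refine (h3.trans (add_le_add h1.le h2.le)).trans_eq ?_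
  rw [add_add_add_comm, ENNReal.add_halves]

lemma XinfHull_smul_le (hX : IsBanachSeqSpace XN) {c : ℝ} (hc : c ≠ 0) (x : ℕ → ℝ) :
    XinfHull XN (c • x) ≤ ENNReal.ofReal |c| * XinfHull XN x := by
  have hc0 : ENNReal.ofReal |c| ≠ 0 := by simpa using hc
  conv_rhs => unfold XinfHull
  simp only [ENNReal.mul_iInf_of_ne hc0 ENNReal.ofReal_ne_top]
  refine le_iInf fun l => le_iInf fun hl => le_iInf fun h => ?_
  subst h
  have h1 := XinfHull_le (XN := XN) (l := l.map (c • ·)) (by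
    intro z hz
    obtain ⟨y, hy, rfl⟩ := List.mem_map.1 hz
    exact (hl y hy).subset (Function.support_const_smul_subset _ _))
  rw [← List.smul_sum] at h1
  refine h1.trans_eq ?_
  rw [List.map_map, ← List.sum_map_mul_left]
  congr 1
  exact List.map_congr_left fun y _ => XinfN_smul hX c y

lemma XinfHull_smul (hX : IsBanachSeqSpace XN) (c : ℝ) (x : ℕ → ℝ) :
    XinfHull XN (c • x) = ENNReal.ofReal |c| * XinfHull XN x := by
  by_cases hc : c = 0
  · subst hc
    have := XinfHull_le (XN := XN) (l := []) (by simp)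
    simpa using this
  refine le_antisymm (XinfHull_smul_le hX hc x) ?_
  have h := XinfHull_smul_le hX (inv_ne_zero hc) (c • x)
  rw [inv_smul_smul₀ hc] at h
  calc _ ≤ ENNReal.ofReal |c| * (ENNReal.ofReal |c⁻¹| * XinfHull XN (c • x)) := by gcongr
    _ = _ := by
      rw [← mul_assoc, ← ENNReal.ofReal_mul (abs_nonneg _), ← abs_mul, mul_inv_cancel₀ hc]
      simp

end hull

theorem statement6 (XN : (ℕ → ℝ) → ℝ≥0∞) (p q M M' C a : ℝ)
    (hp : 1 < p) (hpq : p < q) (hM : 0 < M) (hM' : 0 < M') (hC : 0 < C)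
    (ha : a + 1 / p < 1)
    (hX : IsBanachSeqSpace XN) (hconv : PConvex XN p M) (hconc : QConcave XN q M')
    (hL : LBound XN C a) :
    (∃ N : (ℕ → ℝ) → ℝ≥0∞,
      (∀ x y : ℕ → ℝ, FinSupp x → FinSupp y → N (x + y) ≤ N x + N y) ∧
      (∀ (c : ℝ) (x : ℕ → ℝ), N (c • x) = ENNReal.ofReal |c| * N x) ∧
      ∃ c₁ c₂ : ℝ, 0 < c₁ ∧ 0 < c₂ ∧
        ∀ x : ℕ → ℝ, FinSupp x →
          ENNReal.ofReal c₁ * N x ≤ XinfN XN x ∧ XinfN XN x ≤ ENNReal.ofReal c₂ * N x) ∧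
    (∀ r : ℝ, 0 < r → a + 1 / p < 1 / r →
      ∃ Mr : ℝ, 0 < Mr ∧
        ∀ (k : ℕ) (x : Fin k → ℕ → ℝ), (∀ j, FinSupp (x j)) →
          XinfN XN (fun n => (∑ j, |x j n| ^ r) ^ (1 / r)) ≤
            ENNReal.ofReal Mr * (∑ j, XinfN XN (x j) ^ r) ^ (1 / r)) := by
  have hp0 : 0 < p := by linarith
  have hq0 : 0 < q := by linarith
  refine ⟨?_, fun r hr har => XinfN_convex hX hp0 hq0 hM hM' hC hr har hconv hconc hL⟩
  obtain ⟨R, hR, H⟩ := XinfN_convex hX hp0 hq0 hM hM' hC one_pos (by simpa using ha) hconv hconc hL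
  refine ⟨XinfHull XN, fun x y _ _ => XinfHull_add x y, XinfHull_smul hX, 1, R, one_pos, hR,
    fun x hx => ⟨?_, ?_⟩⟩
  · have := XinfHull_le (XN := XN) (l := [x]) (by simpa using hx)
    simpa using this
  · unfold XinfHull
    simp only [ENNReal.mul_iInf_of_ne (by simpa using hR : ENNReal.ofReal R ≠ 0)
      ENNReal.ofReal_ne_top]
    refine le_iInf fun l => le_iInf fun hl => le_iInf fun h => ?_
    subst h
    have h1 := H l.length l.get fun j => hl _ (List.get_mem _ _)
    have h2 : ∑ j, XinfN XN (l.get j) = (l.map (XinfN XN)).sum := by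
      rw [← List.sum_ofFn]
      congr 1
      exact (List.ofFn_getElem_eq_map l (XinfN XN))
    have h3 : l.sum = ∑ j, l.get j := by
      rw [← List.sum_ofFn, List.ofFn_get]
    simp only [Real.rpow_one, ENNReal.rpow_one, div_one, h2] at h1
    refine le_trans (XinfN_mono hX fun n => ?_) h1
    rw [h3, Finset.sum_apply]
    exact (Finset.abs_sum_le_sum_abs _ _).trans (le_abs_self _)
end
end
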